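/- Let M be an η-Einstein Kenmotsu manifold of dimension 2n+1 > 3. If the metric g is a *-Ricci soliton, then M is Einstein with S = -2n g. -/

import Mathlib

/-- An abstract algebraic model of a `(2n+1)`-dimensional Kenmotsu manifold:
`C` plays the role of the ring of smooth functions on the manifold and vector
fields are modelled as `ℝ`-derivations of `C`.  A global orthonormal frame `e`
is included in order to express traces (Ricci tensor, scalar curvature). -/
structure KenmotsuManifold (n : ℕ) (C : Type*) [CommRing C] [Algebra ℝ C] where
  /-- the Riemannian metric -/
  g : Derivation ℝ C C → Derivation ℝ C C → C
  /-- the structure `(1,1)`-tensor field -/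
  φ : Derivation ℝ C C → Derivation ℝ C C
  /-- the Reeb (characteristic) vector field -/
  ξ : Derivation ℝ C C
  /-- the contact `1`-form -/
  η : Derivation ℝ C C → C
  /-- the Levi-Civita connection -/
  nabla : Derivation ℝ C C → Derivation ℝ C C → Derivation ℝ C C
  /-- a global orthonormal frame, used to take traces -/
  e : Fin (2 * n + 1) → Derivation ℝ C C
  g_symm : ∀ X Y, g X Y = g Y X
  g_add_left : ∀ X Y Z, g (X + Y) Z = g X Z + g Y Z
  g_smul_left : ∀ (f : C) (X Y), g (f • X) Y = f * g X Y
  g_nondeg : ∀ X, (∀ Y, g X Y = 0) → X = 0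
  g_frame : ∀ i j, g (e i) (e j) = if i = j then 1 else 0
  frame_span : ∀ X : Derivation ℝ C C, X = ∑ i, g X (e i) • e i
  phi_phi : ∀ X, φ (φ X) = -X + η X • ξ
  phi_linear : ∀ (f : C) (X Y), φ (f • X + Y) = f • φ X + φ Y
  eta_xi : η ξ = 1
  eta_def : ∀ X, η X = g X ξ
  compat_phi : ∀ X Y, g (φ X) (φ Y) = g X Y - η X * η Y
  nabla_add_left : ∀ X Y Z, nabla (X + Y) Z = nabla X Z + nabla Y Z
  nabla_smul_left : ∀ (f : C) (X Y), nabla (f • X) Y = f • nabla X Y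
  nabla_add_right : ∀ X Y Z, nabla X (Y + Z) = nabla X Y + nabla X Z
  nabla_leibniz : ∀ (X) (f : C) (Y), nabla X (f • Y) = X f • Y + f • nabla X Y
  torsion_free : ∀ X Y, nabla X Y - nabla Y X = ⁅X, Y⁆
  metric_compat : ∀ X Y Z, X (g Y Z) = g (nabla X Y) Z + g Y (nabla X Z)
  /-- the Kenmotsu condition `(∇_X φ)Y = g(φX,Y)ξ - η(Y)φX` -/
  kenmotsu : ∀ X Y, nabla X (φ Y) - φ (nabla X Y) = g (φ X) Y • ξ - η Y • φ X

namespace KenmotsuManifold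

variable {n : ℕ} {C : Type*} [CommRing C] [Algebra ℝ C] (K : KenmotsuManifold n C)

/-- the Riemann curvature tensor `R(X,Y)Z = ∇_X∇_Y Z - ∇_Y∇_X Z - ∇_{[X,Y]}Z` -/
def Rm (X Y Z : Derivation ℝ C C) : Derivation ℝ C C :=
  K.nabla X (K.nabla Y Z) - K.nabla Y (K.nabla X Z) - K.nabla ⁅X, Y⁆ Z

/-- the Ricci tensor `S(X,Y) = trace (Z ↦ R(Z,X)Y)` -/
def S (X Y : Derivation ℝ C C) : C := ∑ i, K.g (K.Rm (K.e i) X Y) (K.e i)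

/-- the Ricci operator `Q`, `g(QX,Y) = S(X,Y)` -/
def Q (X : Derivation ℝ C C) : Derivation ℝ C C := ∑ i, K.S X (K.e i) • K.e i

/-- the scalar curvature `r` -/
def r : C := ∑ i, K.S (K.e i) (K.e i)

/-- the `*`-Ricci tensor `S*(X,Y) = (1/2) trace (Z ↦ R(X,φY)φZ)` -/
noncomputable def Sstar (X Y : Derivation ℝ C C) : C :=
  (2 : ℝ)⁻¹ • ∑ i, K.g (K.Rm X (K.φ Y) (K.φ (K.e i))) (K.e i)

/-- the covariant derivative `(∇_X Q)Y` of the Ricci operator -/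
def nablaQ (X Y : Derivation ℝ C C) : Derivation ℝ C C :=
  K.nabla X (K.Q Y) - K.Q (K.nabla X Y)

/-- the Lie derivative `(£_V g)(X,Y)` of the metric -/
def lieG (V X Y : Derivation ℝ C C) : C :=
  V (K.g X Y) - K.g ⁅V, X⁆ Y - K.g X ⁅V, Y⁆

/-- the Lie derivative `(£_V S)(X,Y)` of the Ricci tensor -/
def lieS (V X Y : Derivation ℝ C C) : C :=
  V (K.S X Y) - K.S ⁅V, X⁆ Y - K.S X ⁅V, Y⁆

/-- `g` is a `*`-Ricci soliton with potential vector field `V` and soliton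
constant `l`: `£_V g + 2S* + 2l g = 0`. -/
def IsStarRicciSoliton (V : Derivation ℝ C C) (l : ℝ) : Prop :=
  ∀ X Y, K.lieG V X Y + 2 * K.Sstar X Y + (2 * l) • K.g X Y = 0

/-- `g` is a gradient almost `*`-Ricci soliton with potential function `f`
(with gradient `F`, i.e. `g(F,X) = Xf`) and soliton function `l`:
`Hess f + S* + l g = 0`. -/
def IsGradAlmostStarRicciSoliton (f : C) (F : Derivation ℝ C C) (l : C) : Prop :=
  (∀ X, K.g F X = X f) ∧ ∀ X Y, K.g (K.nabla X F) Y + K.Sstar X Y + l * K.g X Y = 0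

/-- `M` is `η`-Einstein: `S = α g + β η⊗η`. -/
def IsEtaEinstein : Prop :=
  ∃ α β : C, ∀ X Y, K.S X Y = α * K.g X Y + β * (K.η X * K.η Y)

end KenmotsuManifold

/-!
For an `η`-Einstein metric `S = α g + β η⊗η` the contracted Bianchi identity gives `dβ = -2β η`
once `n > 1`. The `*`-soliton equation expresses `£_V g` through `g`, `η⊗η` and `β`, so the formulas
for the Lie derivative of the Levi-Civita connection and of its curvature determine `£_V T` for the
tensor `T = R + X ∧ Y`: on `ker η` it is `2(β + 1 - l) T + (4β - 2l) (X ∧ Y)`. Since `T` is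
`φ`-invariant in its first and in its last pair of slots, a four-term alternation of `£_V T` in `φ`
vanishes, whereas that of `X ∧ Y` does not for `n > 1`. Hence `2β = l` is constant, and
`ξβ = -2β` forces `β = 0`; then `S(ξ, ξ) = -2n` gives `α = -2n`.
-/

theorem isUnit_natCast_of_algebra_real {A : Type*} [Semiring A] [Algebra ℝ A] {m : ℕ} (hm : m ≠ 0) :
    IsUnit (m : A) := by
  simpa using (Nat.cast_ne_zero.2 hm).isUnit.map (algebraMap ℝ A)

theorem isUnit_natCast_sub_one_of_algebra_real {A : Type*} [Ring A] [Algebra ℝ A] (m : ℕ)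
    [m.AtLeastTwo] : IsUnit ((m : A) - 1) := by
  have hm : 2 ≤ m := Nat.AtLeastTwo.prop
  rw [← Nat.cast_pred (by lia)]
  exact isUnit_natCast_of_algebra_real (by lia)

theorem eq_of_two_mul_eq {A : Type*} [Semiring A] [Algebra ℝ A] {a b : A} (h : 2 * a = 2 * b) :
    a = b :=
  (isUnit_natCast_of_algebra_real two_ne_zero).mul_left_cancel (by exact_mod_cast h)

theorem lie_smul_left_derivation {R A : Type*} [CommRing R] [CommRing A] [Algebra R A]
    (f : A) (X Y : Derivation R A A) : ⁅f • X, Y⁆ = f • ⁅X, Y⁆ - Y f • X := by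
  rw [← lie_skew, LieRinehartRing.leibniz_smul_right, Derivation.bracket_eq_fun, ← lie_skew X Y]
  module

namespace KenmotsuManifold

section Tensors

variable {n : ℕ} {C : Type*} [CommRing C] [Algebra ℝ C] (K : KenmotsuManifold n C)
  (X Y Z W U : Derivation ℝ C C) (f : C)

theorem g_add_right : K.g X (Y + Z) = K.g X Y + K.g X Z := by
  simp only [K.g_symm X, K.g_add_left]

theorem g_smul_right : K.g X (f • Y) = f * K.g X Y := by
  simp only [K.g_symm X, K.g_smul_left]

/-- The metric `g` as a bundled `C`-bilinear form. -/
def metric : Derivation ℝ C C →ₗ[C] Derivation ℝ C C →ₗ[C] C :=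
  LinearMap.mk₂ C K.g K.g_add_left K.g_smul_left K.g_add_right fun f X Y ↦ K.g_smul_right X Y f

theorem g_zero_left : K.g 0 Y = 0 := K.metric.map_zero₂ Y

theorem g_neg_left : K.g (-X) Y = -K.g X Y := K.metric.map_neg₂ X Y

theorem g_neg_right : K.g X (-Y) = -K.g X Y := (K.metric X).map_neg Y

theorem g_sub_left : K.g (X - Y) Z = K.g X Z - K.g Y Z := K.metric.map_sub₂ X Y Z

theorem g_sub_right : K.g X (Y - Z) = K.g X Y - K.g X Z := (K.metric X).map_sub Y Z

variable {X Y} in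
theorem ext_g (h : ∀ Z, K.g X Z = K.g Y Z) : X = Y :=
  sub_eq_zero.1 <| K.g_nondeg _ fun Z ↦ by rw [g_sub_left, h, sub_self]

/-- The structure tensor `φ` as a bundled `C`-linear endomorphism. -/
def phiHom : Derivation ℝ C C →ₗ[C] Derivation ℝ C C :=
  have map_zero : K.φ 0 = 0 := by simpa using K.phi_linear 1 0 0
  { toFun := K.φ
    map_add' := fun X Y ↦ by simpa using K.phi_linear 1 X Y
    map_smul' := fun f X ↦ by simpa [map_zero] using K.phi_linear f X 0 }

theorem phi_zero : K.φ 0 = 0 := K.phiHom.map_zero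

theorem phi_add : K.φ (X + Y) = K.φ X + K.φ Y := K.phiHom.map_add X Y

theorem phi_neg : K.φ (-X) = -K.φ X := K.phiHom.map_neg X

theorem phi_sub : K.φ (X - Y) = K.φ X - K.φ Y := K.phiHom.map_sub X Y

theorem phi_smul : K.φ (f • X) = f • K.φ X := K.phiHom.map_smul f X

/-- The contact form `η` as a bundled `C`-linear form. -/
def etaHom : Derivation ℝ C C →ₗ[C] C := K.metric.flip K.ξ

theorem etaHom_apply : K.etaHom X = K.η X := (K.eta_def X).symm

theorem eta_add : K.η (X + Y) = K.η X + K.η Y := by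
  simp only [← etaHom_apply, map_add]

theorem eta_neg : K.η (-X) = -K.η X := by
  simp only [← etaHom_apply, map_neg]

theorem eta_sub : K.η (X - Y) = K.η X - K.η Y := by
  simp only [← etaHom_apply, map_sub]

theorem eta_smul : K.η (f • X) = f * K.η X := by
  simp only [← etaHom_apply, map_smul, smul_eq_mul]

theorem g_xi_left : K.g K.ξ X = K.η X := by rw [K.g_symm, K.eta_def]

theorem nabla_zero_left : K.nabla 0 X = 0 := by
  simpa using K.nabla_smul_left 0 0 X

theorem nabla_zero_right : K.nabla X 0 = 0 := by
  simpa using K.nabla_leibniz X 0 0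

theorem nabla_neg_left : K.nabla (-X) Y = -K.nabla X Y := by
  simpa using K.nabla_smul_left (-1) X Y

theorem nabla_sub_left : K.nabla (X - Y) Z = K.nabla X Z - K.nabla Y Z := by
  rw [sub_eq_add_neg, K.nabla_add_left, nabla_neg_left, sub_eq_add_neg]

theorem nabla_sub_right : K.nabla X (Y - Z) = K.nabla X Y - K.nabla X Z := by
  rw [eq_sub_iff_add_eq, ← K.nabla_add_right, sub_add_cancel]

/-! ### Traces over the frame -/

theorem map_eq_sum_frame {M : Type*} [AddCommGroup M] [Module C M]
    (F : Derivation ℝ C C →ₗ[C] M) : F X = ∑ i, K.g X (K.e i) • F (K.e i) := by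
  conv_lhs => rw [K.frame_span X]
  simp only [map_sum, map_smul]

theorem sum_g_mul_g : ∑ i, K.g X (K.e i) * K.g Y (K.e i) = K.g X Y := by
  rw [K.g_symm]
  exact (K.map_eq_sum_frame X (K.metric Y)).symm

theorem sum_g_frame : ∑ i, K.g (K.e i) (K.e i) = 2 * (n : C) + 1 := by
  simp [K.g_frame]

theorem sum_eta_mul_g : ∑ i, K.η (K.e i) * K.g X (K.e i) = K.η X := by
  simpa only [g_xi_left] using K.sum_g_mul_g K.ξ X

theorem sum_eta_sq : ∑ i, K.η (K.e i) * K.η (K.e i) = 1 := by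
  simpa only [← K.eta_def, K.eta_xi, K.g_symm K.ξ] using K.sum_g_mul_g K.ξ K.ξ

-- Infinitesimally, a skew operator `A` generates rotations, and these preserve traces.
theorem sum_skew_frame_add (B : Derivation ℝ C C →ₗ[C] Derivation ℝ C C →ₗ[C] C)
    {A : Fin (2 * n + 1) → Derivation ℝ C C}
    (hA : ∀ i j, K.g (A i) (K.e j) = -K.g (A j) (K.e i)) :
    ∑ i, B (A i) (K.e i) + ∑ i, B (K.e i) (A i) = 0 := by
  have expand_left (i) : B (A i) (K.e i) = ∑ j, K.g (A i) (K.e j) * B (K.e j) (K.e i) :=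
    K.map_eq_sum_frame (A i) (B.flip (K.e i))
  have expand_right (i) : B (K.e i) (A i) = ∑ j, K.g (A i) (K.e j) * B (K.e i) (K.e j) :=
    K.map_eq_sum_frame (A i) (B (K.e i))
  simp only [expand_left, expand_right]
  rw [Finset.sum_comm, ← Finset.sum_add_distrib]
  refine Finset.sum_eq_zero fun i _ ↦ ?_
  rw [← Finset.sum_add_distrib]
  refine Finset.sum_eq_zero fun j _ ↦ ?_
  rw [hA j i]
  ring

/-- The covariant derivative `(∇_X B)(Y, Z)` of a scalar-valued form `B` in two arguments. -/
def covDeriv (B : Derivation ℝ C C → Derivation ℝ C C → C) (X Y Z : Derivation ℝ C C) : C :=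
  X (B Y Z) - B (K.nabla X Y) Z - B Y (K.nabla X Z)

theorem g_nabla_frame (i j : Fin (2 * n + 1)) :
    K.g (K.nabla X (K.e i)) (K.e j) = -K.g (K.nabla X (K.e j)) (K.e i) := by
  have hconst : X (K.g (K.e i) (K.e j)) = 0 := by
    rw [K.g_frame]
    split_ifs <;> simp
  rw [K.metric_compat, K.g_symm (K.e i)] at hconst
  exact eq_neg_of_add_eq_zero_left hconst

theorem apply_sum_frame (B : Derivation ℝ C C →ₗ[C] Derivation ℝ C C →ₗ[C] C) :
    X (∑ i, B (K.e i) (K.e i)) = ∑ i, K.covDeriv (fun Y Z ↦ B Y Z) X (K.e i) (K.e i) := by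
  simp only [covDeriv, map_sum, Finset.sum_sub_distrib]
  linear_combination K.sum_skew_frame_add B (K.g_nabla_frame X)

/-! ### Curvature -/

theorem Rm_swap : K.Rm Y X Z = -K.Rm X Y Z := by
  unfold Rm
  rw [← lie_skew X Y, nabla_neg_left]
  abel

theorem Rm_add_left : K.Rm (X + Y) Z W = K.Rm X Z W + K.Rm Y Z W := by
  unfold Rm
  simp only [add_lie, K.nabla_add_left, K.nabla_add_right]
  abel

theorem Rm_smul_left : K.Rm (f • X) Y Z = f • K.Rm X Y Z := by
  unfold Rm
  simp only [lie_smul_left_derivation, nabla_sub_left, K.nabla_smul_left, K.nabla_leibniz]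
  module

theorem Rm_add_mid : K.Rm X (Y + Z) W = K.Rm X Y W + K.Rm X Z W := by
  rw [Rm_swap, Rm_add_left, K.Rm_swap X Y, K.Rm_swap X Z, neg_add_rev, neg_neg, neg_neg, add_comm]

theorem Rm_smul_mid : K.Rm X (f • Y) Z = f • K.Rm X Y Z := by
  rw [Rm_swap, Rm_smul_left, K.Rm_swap X Y, smul_neg, neg_neg]

theorem Rm_add_right : K.Rm X Y (Z + W) = K.Rm X Y Z + K.Rm X Y W := by
  unfold Rm
  simp only [K.nabla_add_right]
  abel

theorem Rm_smul_right : K.Rm X Y (f • Z) = f • K.Rm X Y Z := by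
  unfold Rm
  simp only [K.nabla_add_right, K.nabla_leibniz, Derivation.commutator_apply]
  module

/-- The endomorphism `Z ↦ R(Z, X)Y`, whose trace is the Ricci tensor. -/
def RmHom : Derivation ℝ C C →ₗ[C] Derivation ℝ C C where
  toFun Z := K.Rm Z X Y
  map_add' Z W := K.Rm_add_left Z W X Y
  map_smul' f Z := K.Rm_smul_left Z X Y f

/-- The Ricci tensor `S` as a bundled `C`-bilinear form. -/
def ricciForm : Derivation ℝ C C →ₗ[C] Derivation ℝ C C →ₗ[C] C :=
  LinearMap.mk₂ C K.S
    (fun X Y Z ↦ by simp only [S, Rm_add_mid, K.g_add_left, Finset.sum_add_distrib])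
    (fun f X Y ↦ by simp only [S, Rm_smul_mid, K.g_smul_left, Finset.mul_sum, smul_eq_mul])
    (fun X Y Z ↦ by simp only [S, Rm_add_right, K.g_add_left, Finset.sum_add_distrib])
    (fun f X Y ↦ by simp only [S, Rm_smul_right, K.g_smul_left, Finset.mul_sum, smul_eq_mul])

theorem g_Rm_skew : K.g (K.Rm X Y Z) W = -K.g (K.Rm X Y W) Z := by
  have hXY : X (Y (K.g Z W)) = K.g (K.nabla X (K.nabla Y Z)) W + K.g (K.nabla Y Z) (K.nabla X W)
      + (K.g (K.nabla X Z) (K.nabla Y W) + K.g Z (K.nabla X (K.nabla Y W))) := by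
    rw [K.metric_compat Y, map_add, K.metric_compat X, K.metric_compat X]
  have hYX : Y (X (K.g Z W)) = K.g (K.nabla Y (K.nabla X Z)) W + K.g (K.nabla X Z) (K.nabla Y W)
      + (K.g (K.nabla Y Z) (K.nabla X W) + K.g Z (K.nabla Y (K.nabla X W))) := by
    rw [K.metric_compat X, map_add, K.metric_compat Y, K.metric_compat Y]
  have hlie := K.metric_compat ⁅X, Y⁆ Z W
  rw [Derivation.commutator_apply] at hlie
  rw [K.g_symm (K.Rm X Y W)]
  unfold Rm
  simp only [g_sub_left, g_sub_right]
  linear_combination hYX - hXY + hlie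

theorem Rm_bianchi : K.Rm X Y Z + K.Rm Y Z X + K.Rm Z X Y = 0 := by
  have nabla_lie (X Y Z) : K.nabla X (K.nabla Y Z) - K.nabla X (K.nabla Z Y)
      - K.nabla ⁅Y, Z⁆ X = ⁅X, ⁅Y, Z⁆⁆ := by
    rw [← nabla_sub_right, K.torsion_free Y Z, K.torsion_free]
  unfold Rm
  linear_combination (norm := module)
    nabla_lie X Y Z + nabla_lie Y Z X + nabla_lie Z X Y + lie_jacobi X Y Z

/-- The covariant derivative `(∇_X R)(Y, Z)W` of the curvature tensor. -/
def nablaRm (X Y Z W : Derivation ℝ C C) : Derivation ℝ C C :=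
  K.nabla X (K.Rm Y Z W) - K.Rm (K.nabla X Y) Z W - K.Rm Y (K.nabla X Z) W
    - K.Rm Y Z (K.nabla X W)

theorem nablaRm_swap : K.nablaRm X Z Y W = -K.nablaRm X Y Z W := by
  unfold nablaRm
  rw [K.Rm_swap Y Z, K.Rm_swap Y (K.nabla X Z), K.Rm_swap (K.nabla X Y) Z, K.Rm_swap Y Z,
    ← zero_sub (K.Rm Y Z W), nabla_sub_right, nabla_zero_right]
  abel

theorem g_nablaRm_skew : K.g (K.nablaRm X Y Z W) U = -K.g (K.nablaRm X Y Z U) W := by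
  have hX := congrArg X (K.g_Rm_skew Y Z W U)
  rw [map_neg, K.metric_compat, K.metric_compat] at hX
  unfold nablaRm
  simp only [g_sub_left]
  linear_combination hX - K.g_Rm_skew (K.nabla X Y) Z W U - K.g_Rm_skew Y (K.nabla X Z) W U
    - K.g_Rm_skew Y Z (K.nabla X W) U - K.g_Rm_skew Y Z W (K.nabla X U)

theorem Rm_lie_left : K.Rm ⁅X, Y⁆ Z W = K.Rm (K.nabla X Y) Z W + K.Rm Z (K.nabla Y X) W := by
  rw [← K.torsion_free, sub_eq_add_neg, Rm_add_left, ← neg_one_smul C, Rm_smul_left,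
    K.Rm_swap _ Z, neg_one_smul]

theorem nablaRm_bianchi :
    K.nablaRm X Y Z W + K.nablaRm Y Z X W + K.nablaRm Z X Y W = 0 := by
  have jacobi : ⁅⁅X, Y⁆, Z⁆ + ⁅⁅Y, Z⁆, X⁆ + ⁅⁅Z, X⁆, Y⁆ = 0 := by
    rw [← lie_skew ⁅X, Y⁆, ← lie_skew ⁅Y, Z⁆, ← lie_skew ⁅Z, X⁆]
    linear_combination (norm := module) -lie_jacobi X Y Z
  have nabla_jacobi := congrArg (K.nabla · W) jacobi
  simp only [K.nabla_add_left, nabla_zero_left] at nabla_jacobi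
  have commutators : K.nabla X (K.Rm Y Z W) - K.Rm Y Z (K.nabla X W)
      + (K.nabla Y (K.Rm Z X W) - K.Rm Z X (K.nabla Y W))
      + (K.nabla Z (K.Rm X Y W) - K.Rm X Y (K.nabla Z W))
      = K.Rm ⁅X, Y⁆ Z W + K.Rm ⁅Y, Z⁆ X W + K.Rm ⁅Z, X⁆ Y W := by
    unfold Rm
    simp only [nabla_sub_right]
    linear_combination (norm := module) nabla_jacobi
  unfold nablaRm
  linear_combination (norm := module)
    commutators + K.Rm_lie_left X Y Z W + K.Rm_lie_left Y Z X W + K.Rm_lie_left Z X Y W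

theorem covDeriv_S :
    K.covDeriv K.S X Y Z = ∑ i, K.g (K.nablaRm X (K.e i) Y Z) (K.e i) := by
  have htrace := K.apply_sum_frame X (K.metric ∘ₗ K.RmHom Y Z)
  change X (K.S Y Z) = ∑ i, K.covDeriv (fun Z' W ↦ K.g (K.Rm Z' Y Z) W) X (K.e i) (K.e i)
    at htrace
  simp only [covDeriv, K.metric_compat] at htrace
  rw [covDeriv, htrace]
  simp only [S, nablaRm, g_sub_left, ← Finset.sum_sub_distrib]
  exact Finset.sum_congr rfl fun i _ ↦ by ring

theorem apply_r_eq_sum_covDeriv_S : X K.r = 2 * ∑ i, K.covDeriv K.S (K.e i) X (K.e i) := by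
  have hr : X K.r = ∑ j, ∑ i, K.g (K.nablaRm X (K.e i) (K.e j) (K.e j)) (K.e i) := by
    simp only [← covDeriv_S]
    exact K.apply_sum_frame X K.ricciForm
  have hbianchi (i j) : K.g (K.nablaRm X (K.e i) (K.e j) (K.e j)) (K.e i)
      = K.g (K.nablaRm (K.e i) (K.e j) X (K.e i)) (K.e j)
        + K.g (K.nablaRm (K.e j) (K.e i) X (K.e j)) (K.e i) := by
    have h := congrArg (K.g · (K.e i)) (K.nablaRm_bianchi X (K.e i) (K.e j) (K.e j))
    simp only [K.g_add_left, g_zero_left] at h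
    rw [K.nablaRm_swap (K.e j) (K.e i) X, g_neg_left,
      K.g_nablaRm_skew (K.e i) (K.e j) X (K.e j)] at h
    linear_combination h
  rw [hr]
  simp only [hbianchi, Finset.sum_add_distrib, covDeriv_S]
  rw [Finset.sum_comm, ← two_mul]

end Tensors

section AlmostContact

variable {n : ℕ} {C : Type*} [CommRing C] [Algebra ℝ C] (K : KenmotsuManifold n C)
  (X Y : Derivation ℝ C C)

theorem eta_nabla_xi : K.η (K.nabla X K.ξ) = 0 := by
  have h := K.metric_compat X K.ξ K.ξ
  rw [g_xi_left, g_xi_left, ← K.eta_def, K.eta_xi, Derivation.map_one_eq_zero, ← two_mul] at h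
  exact eq_of_two_mul_eq (h.symm.trans (mul_zero 2).symm)

/-! ### The identity `φξ = 0` -/

theorem phi_xi_eq_smul : K.φ K.ξ = K.η (K.φ K.ξ) • K.ξ := by
  have h := K.phi_phi (K.φ K.ξ)
  rw [K.phi_phi K.ξ, K.eta_xi, one_smul, neg_add_cancel, phi_zero] at h
  linear_combination (norm := module) h

theorem eta_phi_xi_mul_self : K.η (K.φ K.ξ) * K.η (K.φ K.ξ) = 0 := by
  have h := K.compat_phi K.ξ K.ξ
  rw [phi_xi_eq_smul, K.g_smul_left, g_smul_right, g_xi_left, K.eta_xi] at h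
  linear_combination h

theorem eta_phi_eq_mul : K.η (K.φ X) = K.η (K.φ K.ξ) * K.η X := by
  have h := congrArg K.η (K.phi_phi (K.φ X))
  rw [K.phi_phi X, phi_add, phi_neg, phi_smul, phi_xi_eq_smul, eta_add, eta_add, eta_neg,
    eta_smul, eta_smul, eta_smul, K.eta_xi] at h
  linear_combination -h

theorem g_phi_add : K.g (K.φ X) Y + K.g X (K.φ Y) = 2 * K.η (K.φ K.ξ) * K.η X * K.η Y := by
  have h := K.compat_phi X (K.φ Y)
  rw [K.phi_phi, g_add_right, g_neg_right, g_smul_right, ← K.eta_def, eta_phi_eq_mul,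
    K.eta_phi_eq_mul Y] at h
  linear_combination -h

theorem apply_eta_phi_xi : X (K.η (K.φ K.ξ)) = 0 := by
  have h := congrArg K.η (K.kenmotsu X K.ξ)
  rw [phi_xi_eq_smul, K.nabla_leibniz, eta_sub, eta_add, eta_smul, eta_smul, eta_nabla_xi,
    K.eta_phi_eq_mul (K.nabla X K.ξ), eta_nabla_xi, eta_sub, eta_smul, eta_smul, ← K.eta_def,
    K.eta_xi, K.eta_phi_eq_mul X] at h
  linear_combination h

theorem phi_nabla_xi_eq : K.φ (K.nabla X K.ξ)
    = K.η (K.φ K.ξ) • K.nabla X K.ξ - (K.η (K.φ K.ξ) * K.η X) • K.ξ + K.φ X := by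
  have h := K.kenmotsu X K.ξ
  rw [phi_xi_eq_smul, K.nabla_leibniz, apply_eta_phi_xi, ← K.eta_def, K.eta_phi_eq_mul X,
    K.eta_xi] at h
  linear_combination (norm := module) -h

theorem eta_phi_xi_smul_nabla_xi : K.η (K.φ K.ξ) • K.nabla X K.ξ = 0 := by
  refine K.g_nondeg _ fun Y ↦ ?_
  have hY := congrArg X (K.eta_phi_eq_mul Y)
  rw [Derivation.leibniz, apply_eta_phi_xi, K.eta_def, K.eta_def Y, K.metric_compat,
    K.metric_compat, sub_eq_iff_eq_add.1 (K.kenmotsu X Y)] at hY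
  simp only [← K.eta_def, eta_add, eta_sub, eta_smul, K.eta_xi, smul_eq_mul,
    K.eta_phi_eq_mul X, K.eta_phi_eq_mul (K.nabla X Y)] at hY
  have hskew := K.g_phi_add Y (K.nabla X K.ξ)
  rw [phi_nabla_xi_eq, eta_nabla_xi, g_add_right, g_sub_right, g_smul_right, g_smul_right,
    ← K.eta_def, K.g_symm Y (K.φ X)] at hskew
  rw [K.g_smul_left, K.g_symm]
  exact eq_of_two_mul_eq (by linear_combination hskew - hY)

theorem eta_phi_xi_smul_phi : K.η (K.φ K.ξ) • K.φ X = 0 := by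
  have h := congrArg (K.η (K.φ K.ξ) • ·) (K.phi_nabla_xi_eq X)
  simp only [← phi_smul, eta_phi_xi_smul_nabla_xi, phi_zero, smul_add, smul_sub, smul_smul,
    ← mul_assoc, eta_phi_xi_mul_self] at h
  rw [← phi_smul]
  linear_combination (norm := module) -h

theorem sum_g_phi_phi : ∑ i, K.g (K.φ (K.e i)) (K.φ (K.e i)) = 2 * (n : C) := by
  simp only [K.compat_phi, Finset.sum_sub_distrib, sum_g_frame, sum_eta_sq]
  ring

theorem phi_xi [NeZero n] : K.φ K.ξ = 0 := by
  have htrace : (2 * n : ℕ) * K.η (K.φ K.ξ) = 0 := by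
    rw [Nat.cast_mul, Nat.cast_two, ← K.sum_g_phi_phi, Finset.sum_mul]
    refine Finset.sum_eq_zero fun i _ ↦ ?_
    rw [mul_comm, ← K.g_smul_left, eta_phi_xi_smul_phi, g_zero_left]
  have hunit : IsUnit ((2 * n : ℕ) : C) :=
    isUnit_natCast_of_algebra_real (mul_ne_zero two_ne_zero (NeZero.ne n))
  rw [phi_xi_eq_smul, hunit.mul_right_eq_zero.1 htrace, zero_smul]

/-! ### Kenmotsu identities -/

theorem nabla_phi :
    K.nabla X (K.φ Y) = K.φ (K.nabla X Y) + K.g (K.φ X) Y • K.ξ - K.η Y • K.φ X := by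
  linear_combination (norm := module) K.kenmotsu X Y

variable [NeZero n]

theorem eta_phi : K.η (K.φ X) = 0 := by
  rw [eta_phi_eq_mul, phi_xi, K.eta_def, g_zero_left, zero_mul]

theorem g_phi_left : K.g (K.φ X) Y = -K.g X (K.φ Y) := by
  have h := K.g_phi_add X Y
  rw [eta_phi] at h
  linear_combination h

theorem g_phi_self : K.g (K.φ X) X = 0 := by
  refine eq_of_two_mul_eq ?_
  linear_combination K.g_phi_left X X - K.g_symm X (K.φ X)

theorem nabla_xi : K.nabla X K.ξ = X - K.η X • K.ξ := by
  have h := congrArg K.φ (K.kenmotsu X K.ξ)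
  rw [phi_xi, nabla_zero_right, zero_sub, phi_neg, K.phi_phi, eta_nabla_xi, ← K.eta_def, eta_phi,
    K.eta_xi, phi_sub, phi_smul, phi_smul, K.phi_phi] at h
  linear_combination (norm := module) h

theorem apply_eta : X (K.η Y) = K.η (K.nabla X Y) + K.g X Y - K.η X * K.η Y := by
  rw [K.eta_def Y, K.metric_compat, nabla_xi, g_sub_right, g_smul_right, ← K.eta_def,
    ← K.eta_def, K.g_symm Y]
  ring

theorem Rm_xi : K.Rm X Y K.ξ = K.η X • Y - K.η Y • X := by
  unfold Rm
  simp only [nabla_xi, nabla_sub_right, K.nabla_leibniz, apply_eta, ← K.torsion_free, eta_sub,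
    K.g_symm Y X]
  module

theorem sum_g_phi_mul_g_phi :
    ∑ i, K.g X (K.φ (K.e i)) * K.g Y (K.φ (K.e i)) = K.g (K.φ X) (K.φ Y) := by
  rw [← sum_g_mul_g]
  simp only [K.g_phi_left X, K.g_phi_left Y, neg_mul_neg]

end AlmostContact

section KahlerCurvature

variable {n : ℕ} {C : Type*} [CommRing C] [Algebra ℝ C] (K : KenmotsuManifold n C)
  (X Y Z U : Derivation ℝ C C)

/-- The curvature tensor `(X ∧ Y)Z = g(Y,Z)X - g(X,Z)Y` of constant curvature `1`. -/
def wedge (X Y Z : Derivation ℝ C C) : Derivation ℝ C C := K.g Y Z • X - K.g X Z • Y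

/-- The tensor `R + X ∧ Y`, which measures the deviation from constant curvature `-1`. On a Kenmotsu
manifold it has the symmetries of a Kähler curvature tensor on the distribution `ker η`. -/
def kahlerRm (X Y Z : Derivation ℝ C C) : Derivation ℝ C C := K.Rm X Y Z + K.wedge X Y Z

/-- The Ricci trace of `kahlerRm`. -/
def kahlerRicci (X Y : Derivation ℝ C C) : C := ∑ i, K.g (K.kahlerRm (K.e i) X Y) (K.e i)

theorem kahlerRm_swap : K.kahlerRm Y X Z = -K.kahlerRm X Y Z := by
  unfold kahlerRm wedge
  rw [Rm_swap]
  module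

theorem g_kahlerRm_skew : K.g (K.kahlerRm X Y Z) U = -K.g (K.kahlerRm X Y U) Z := by
  unfold kahlerRm wedge
  simp only [K.g_add_left, g_sub_left, K.g_smul_left]
  rw [g_Rm_skew]
  ring

theorem kahlerRm_bianchi : K.kahlerRm X Y Z + K.kahlerRm Y Z X + K.kahlerRm Z X Y = 0 := by
  unfold kahlerRm wedge
  rw [K.g_symm Z X, K.g_symm Z Y, K.g_symm Y X]
  linear_combination (norm := module) K.Rm_bianchi X Y Z

theorem g_kahlerRm_pair_symm : K.g (K.kahlerRm X Y Z) U = K.g (K.kahlerRm Z U X) Y := by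
  have cyclic (X Y Z U) : K.g (K.kahlerRm X Y Z) U + K.g (K.kahlerRm Y Z X) U
      + K.g (K.kahlerRm Z X Y) U = 0 := by
    rw [← K.g_add_left, ← K.g_add_left, kahlerRm_bianchi, g_zero_left]
  have swap (X Y Z U) : K.g (K.kahlerRm Y X Z) U = -K.g (K.kahlerRm X Y Z) U := by
    rw [kahlerRm_swap, g_neg_left]
  have skew := K.g_kahlerRm_skew
  refine eq_of_two_mul_eq ?_
  linear_combination cyclic Y Z X U + cyclic Z X U Y + cyclic X U Y Z + cyclic U Y Z X
    - skew Y Z X U - skew Z X Y U - skew X U Z Y - skew U Y X Z - swap U Z X Y - swap Y X U Z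
    + skew X Y U Z - skew Z U Y X

theorem kahlerRicci_eq : K.kahlerRicci X Y = K.S X Y + 2 * n * K.g X Y := by
  simp only [kahlerRicci, kahlerRm, wedge, S, K.g_add_left, g_sub_left, K.g_smul_left,
    Finset.sum_add_distrib, Finset.sum_sub_distrib, ← Finset.mul_sum, sum_g_frame]
  simp only [K.g_symm (K.e _) Y, sum_g_mul_g, K.g_symm Y X]
  ring

/-- The endomorphism `Z ↦ kahlerRm Z X Y`, whose trace is `kahlerRicci X Y`. -/
def kahlerRmHom : Derivation ℝ C C →ₗ[C] Derivation ℝ C C :=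
  K.RmHom X Y + (K.g X Y • LinearMap.id - (K.metric.flip Y).smulRight X)

theorem kahlerRicci_comm : K.kahlerRicci X Y = K.kahlerRicci Y X := by
  refine Finset.sum_congr rfl fun i _ ↦ ?_
  rw [g_kahlerRm_pair_symm, kahlerRm_swap, g_neg_left, g_kahlerRm_skew, neg_neg]

/-! ### Invariance under `φ` -/

variable [NeZero n]

theorem kahlerRm_xi : K.kahlerRm X Y K.ξ = 0 := by
  rw [kahlerRm, wedge, Rm_xi, ← K.eta_def, ← K.eta_def]
  abel

theorem eta_kahlerRm : K.η (K.kahlerRm X Y Z) = 0 := by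
  rw [K.eta_def, g_kahlerRm_skew, kahlerRm_xi, g_zero_left, neg_zero]

theorem kahlerRm_phi : K.kahlerRm X Y (K.φ Z) = K.φ (K.kahlerRm X Y Z) := by
  unfold kahlerRm wedge Rm
  simp only [nabla_phi, nabla_sub_right, K.nabla_add_right, K.nabla_leibniz, apply_eta,
    ← K.torsion_free, phi_add, phi_sub, phi_smul, g_phi_left, nabla_sub_left, nabla_xi,
    K.metric_compat, g_add_right, g_sub_right, g_sub_left, g_smul_right, map_neg]
  have hXY : K.g X (K.φ Y) = -K.g Y (K.φ X) := by rw [← g_phi_left, K.g_symm]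
  rw [hXY, ← K.eta_def X, ← K.eta_def Y]
  module

theorem g_kahlerRm_phi_phi : K.g (K.kahlerRm X Y (K.φ Z)) (K.φ U) = K.g (K.kahlerRm X Y Z) U := by
  rw [kahlerRm_phi, K.compat_phi, eta_kahlerRm, zero_mul, sub_zero]

theorem kahlerRm_phi_phi : K.kahlerRm (K.φ X) (K.φ Y) Z = K.kahlerRm X Y Z :=
  K.ext_g fun U ↦ by rw [g_kahlerRm_pair_symm, g_kahlerRm_phi_phi, g_kahlerRm_pair_symm]

theorem sum_g_kahlerRm_phi :
    ∑ i, K.g (K.kahlerRm (K.φ (K.e i)) X Y) (K.e i) = K.kahlerRicci X (K.φ Y) := by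
  have hskew := K.sum_skew_frame_add (A := fun i ↦ K.φ (K.e i)) (K.metric ∘ₗ K.kahlerRmHom X Y)
    fun i j ↦ by rw [g_phi_left, K.g_symm]
  change ∑ i, K.g (K.kahlerRm (K.φ (K.e i)) X Y) (K.e i)
    + ∑ i, K.g (K.kahlerRm (K.e i) X Y) (K.φ (K.e i)) = 0 at hskew
  rw [eq_neg_of_add_eq_zero_left hskew, ← Finset.sum_neg_distrib]
  exact Finset.sum_congr rfl fun i _ ↦ by rw [kahlerRm_phi, g_phi_left]

theorem kahlerRicci_phi_phi_right : K.kahlerRicci X (K.φ (K.φ Y)) = -K.kahlerRicci X Y := by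
  simp only [kahlerRicci]
  rw [← Finset.sum_neg_distrib]
  exact Finset.sum_congr rfl fun i _ ↦ by
    rw [kahlerRm_phi, kahlerRm_phi, K.phi_phi, eta_kahlerRm, zero_smul, add_zero, g_neg_left]

theorem sum_g_kahlerRm_phi_phi :
    ∑ i, K.g (K.kahlerRm X (K.φ Y) (K.φ (K.e i))) (K.e i) = 2 * K.kahlerRicci X Y := by
  have hbianchi (i) : K.g (K.kahlerRm X (K.φ Y) (K.φ (K.e i))) (K.e i)
      = K.g (K.kahlerRm (K.e i) Y X) (K.e i)
        - K.g (K.kahlerRm (K.φ (K.e i)) X (K.φ Y)) (K.e i) := by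
    have h := congrArg (K.g · (K.e i)) (K.kahlerRm_bianchi X (K.φ Y) (K.φ (K.e i)))
    simp only [K.g_add_left, g_zero_left, kahlerRm_phi_phi, K.kahlerRm_swap (K.e i) Y,
      g_neg_left] at h
    linear_combination h
  simp only [hbianchi, Finset.sum_sub_distrib, sum_g_kahlerRm_phi, kahlerRicci_phi_phi_right]
  rw [← kahlerRicci, kahlerRicci_comm]
  ring

theorem sum_g_wedge_phi_phi :
    ∑ i, K.g (K.wedge X (K.φ Y) (K.φ (K.e i))) (K.e i) = 2 * (K.g X Y - K.η X * K.η Y) := by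
  have hterm (i) : K.g (K.wedge X (K.φ Y) (K.φ (K.e i))) (K.e i)
      = K.g X (K.e i) * K.g Y (K.e i) - K.η Y * (K.η (K.e i) * K.g X (K.e i))
        + K.g (K.φ X) (K.e i) * K.g (K.φ Y) (K.e i) := by
    rw [wedge, g_sub_left, K.g_smul_left, K.g_smul_left, K.compat_phi, K.g_phi_left X]
    ring
  simp only [hterm, Finset.sum_add_distrib, Finset.sum_sub_distrib, ← Finset.mul_sum, sum_g_mul_g,
    sum_eta_mul_g, K.compat_phi]
  ring

theorem Sstar_eq : K.Sstar X Y = K.S X Y + (2 * n - 1) * K.g X Y + K.η X * K.η Y := by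
  have htrace : ∑ i, K.g (K.Rm X (K.φ Y) (K.φ (K.e i))) (K.e i)
      = 2 * (K.S X Y + (2 * n - 1) * K.g X Y + K.η X * K.η Y) := by
    have h := K.sum_g_kahlerRm_phi_phi X Y
    simp only [kahlerRm, K.g_add_left, Finset.sum_add_distrib] at h
    rw [sum_g_wedge_phi_phi, kahlerRicci_eq] at h
    linear_combination h
  rw [Sstar, htrace, two_mul, ← two_smul ℝ, inv_smul_smul₀ two_ne_zero]

theorem S_xi_xi : K.S K.ξ K.ξ = -(2 * n) := by
  have h : K.kahlerRicci K.ξ K.ξ = 0 := by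
    simp only [kahlerRicci, kahlerRm_xi, g_zero_left, Finset.sum_const_zero]
  rw [kahlerRicci_eq, g_xi_left, K.eta_xi] at h
  linear_combination h

end KahlerCurvature

section EtaEinstein

variable {n : ℕ} {C : Type*} [CommRing C] [Algebra ℝ C] (K : KenmotsuManifold n C)
  (X Y Z : Derivation ℝ C C)

/-- The symmetric form `p g + q η⊗η`; the metric is `η`-Einstein if the Ricci tensor has this
shape. -/
def etaForm (p q : C) (Y Z : Derivation ℝ C C) : C := p * K.g Y Z + q * (K.η Y * K.η Z)

theorem sum_g_mul_apply_frame (f : C) : ∑ i, K.g X (K.e i) * K.e i f = X f :=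
  let evalAt : Derivation ℝ C C →ₗ[C] C :=
    { toFun := fun Y ↦ Y f, map_add' := fun _ _ ↦ rfl, map_smul' := fun _ _ ↦ rfl }
  (K.map_eq_sum_frame X evalAt).symm

theorem sum_etaForm (p q : C) :
    ∑ i, K.etaForm p q (K.e i) (K.e i) = (2 * n + 1) * p + q := by
  simp only [etaForm, Finset.sum_add_distrib, ← Finset.mul_sum, sum_g_frame, sum_eta_sq]
  ring

variable [NeZero n]

theorem covDeriv_etaForm (p q : C) : K.covDeriv (K.etaForm p q) X Y Z
    = X p * K.g Y Z + X q * (K.η Y * K.η Z)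
      + q * ((K.g X Y - K.η X * K.η Y) * K.η Z + K.η Y * (K.g X Z - K.η X * K.η Z)) := by
  simp only [covDeriv, etaForm, map_add, Derivation.leibniz, smul_eq_mul, apply_eta,
    K.metric_compat]
  ring

theorem sum_covDeriv_etaForm (p q : C) :
    ∑ i, K.covDeriv (K.etaForm p q) (K.e i) X (K.e i) = X p + (K.ξ q + 2 * n * q) * K.η X := by
  have hterm (i) : K.covDeriv (K.etaForm p q) (K.e i) X (K.e i)
      = K.g X (K.e i) * K.e i p + K.η X * (K.g K.ξ (K.e i) * K.e i q)
        + q * (K.η (K.e i) * K.g X (K.e i)) + q * K.η X * K.g (K.e i) (K.e i)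
        - 2 * q * K.η X * (K.η (K.e i) * K.η (K.e i)) := by
    rw [covDeriv_etaForm, K.g_symm (K.e i) X, g_xi_left]
    ring
  simp only [hterm, Finset.sum_add_distrib, Finset.sum_sub_distrib, ← Finset.mul_sum,
    sum_g_mul_apply_frame, sum_eta_mul_g, sum_g_frame, sum_eta_sq]
  ring

variable {K} {α β : C}

theorem etaEinstein_left_coeff (hS : K.S = K.etaForm α β) : α = -(2 * n) - β := by
  have h := K.S_xi_xi
  rw [hS, etaForm, g_xi_left, K.eta_xi] at h
  linear_combination h

theorem contracted_bianchi_etaEinstein (hS : K.S = K.etaForm α β) :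
    (n - 1) * X β + (K.ξ β + 2 * n * β) * K.η X = 0 := by
  have hα := etaEinstein_left_coeff hS
  have hXα (X : Derivation ℝ C C) : X α = -X β := by
    have hconst : X (2 * n : C) = 0 := by exact_mod_cast X.map_natCast (2 * n)
    rw [hα, map_sub, map_neg, hconst, neg_zero, zero_sub]
  have hr : K.r = -((2 * n : ℕ) * ((2 * n + 1 : ℕ) + β)) := by
    rw [r, hS, sum_etaForm, hα]
    push_cast
    ring
  have h := K.apply_r_eq_sum_covDeriv_S X
  rw [hS, sum_covDeriv_etaForm, hXα, hr, map_neg, Derivation.leibniz, map_add] at h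
  simp only [Derivation.map_natCast, zero_add, smul_eq_mul] at h
  push_cast at h
  refine eq_of_two_mul_eq ?_
  linear_combination -h

theorem lieG_eq_etaForm_of_isStarRicciSoliton (hS : K.S = K.etaForm α β)
    {V : Derivation ℝ C C} {l : ℝ} (hV : K.IsStarRicciSoliton V l) :
    K.lieG V = K.etaForm (2 * (β + 1 - algebraMap ℝ C l)) (-(2 * (β + 1))) := by
  funext X Y
  have h := hV X Y
  rw [Sstar_eq, hS, etaEinstein_left_coeff hS, etaForm, Algebra.smul_def, map_mul, map_ofNat] at h
  rw [etaForm]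
  linear_combination h

end EtaEinstein

section LieDerivative

variable {n : ℕ} {C : Type*} [CommRing C] [Algebra ℝ C] (K : KenmotsuManifold n C)
  (V X Y Z U : Derivation ℝ C C)

/-- The Lie derivative `(£_V ∇)(X, Y)` of the Levi-Civita connection. -/
def lieNabla (V X Y : Derivation ℝ C C) : Derivation ℝ C C :=
  ⁅V, K.nabla X Y⁆ - K.nabla ⁅V, X⁆ Y - K.nabla X ⁅V, Y⁆

/-- The Lie derivative `(£_V R)(X, Y)Z` of the curvature tensor. -/
def lieRm (V X Y Z : Derivation ℝ C C) : Derivation ℝ C C :=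
  ⁅V, K.Rm X Y Z⁆ - K.Rm ⁅V, X⁆ Y Z - K.Rm X ⁅V, Y⁆ Z - K.Rm X Y ⁅V, Z⁆

/-- The Lie derivative along `V` of the `(0,4)`-tensor `g(kahlerRm(X, Y)Z, U)`. -/
def lieKahler (V X Y Z U : Derivation ℝ C C) : C :=
  V (K.g (K.kahlerRm X Y Z) U) - K.g (K.kahlerRm ⁅V, X⁆ Y Z) U - K.g (K.kahlerRm X ⁅V, Y⁆ Z) U
    - K.g (K.kahlerRm X Y ⁅V, Z⁆) U - K.g (K.kahlerRm X Y Z) ⁅V, U⁆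

theorem lieNabla_comm : K.lieNabla V X Y = K.lieNabla V Y X := by
  have htorsion := congrArg (⁅V, ·⁆) (K.torsion_free X Y)
  simp only [lie_sub] at htorsion
  unfold lieNabla
  linear_combination (norm := module)
    htorsion - K.torsion_free ⁅V, X⁆ Y - K.torsion_free X ⁅V, Y⁆ + leibniz_lie V X Y

theorem covDeriv_lieG :
    K.covDeriv (K.lieG V) X Y Z = K.g (K.lieNabla V X Y) Z + K.g Y (K.lieNabla V X Z) := by
  have hVX := congrArg V (K.metric_compat X Y Z)
  have hlie := K.metric_compat ⁅V, X⁆ Y Z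
  rw [map_add] at hVX
  rw [Derivation.commutator_apply] at hlie
  unfold covDeriv lieG lieNabla
  simp only [map_sub, g_sub_left, g_sub_right]
  linear_combination hVX - hlie - K.metric_compat X ⁅V, Y⁆ Z - K.metric_compat X Y ⁅V, Z⁆

theorem two_mul_g_lieNabla : 2 * K.g (K.lieNabla V X Y) Z
    = K.covDeriv (K.lieG V) X Y Z + K.covDeriv (K.lieG V) Y X Z
      - K.covDeriv (K.lieG V) Z X Y := by
  rw [covDeriv_lieG, covDeriv_lieG, covDeriv_lieG, K.lieNabla_comm V Y X, K.lieNabla_comm V Z X,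
    K.lieNabla_comm V Z Y, K.g_symm Y, K.g_symm X (K.lieNabla V Y Z)]
  ring

theorem lieRm_eq_lieNabla : K.lieRm V X Y Z
    = K.nabla X (K.lieNabla V Y Z) + K.lieNabla V X (K.nabla Y Z)
      - K.nabla Y (K.lieNabla V X Z) - K.lieNabla V Y (K.nabla X Z)
      - K.lieNabla V ⁅X, Y⁆ Z := by
  unfold lieRm Rm lieNabla
  simp only [lie_sub, nabla_sub_right]
  rw [leibniz_lie V X Y, K.nabla_add_left]
  abel

theorem lieKahler_eq_lieRm : K.lieKahler V X Y Z U
    = K.lieG V (K.Rm X Y Z) U + K.g (K.lieRm V X Y Z) U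
      + (K.lieG V Y Z * K.g X U + K.g Y Z * K.lieG V X U)
      - (K.lieG V X Z * K.g Y U + K.g X Z * K.lieG V Y U) := by
  unfold lieKahler kahlerRm wedge lieRm lieG
  simp only [K.g_add_left, g_sub_left, K.g_smul_left, map_add, map_sub, Derivation.leibniz,
    smul_eq_mul]
  ring

variable [NeZero n]

-- The brackets `⁅V, ·⁆` in one pair of slots cancel by the invariance in the other pair, so that no
-- derivative of `φ` enters.
theorem lieKahler_alternation :
    K.lieKahler V X Y Z U - K.lieKahler V (K.φ X) (K.φ Y) Z U
      - K.lieKahler V X Y (K.φ Z) (K.φ U)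
      + K.lieKahler V (K.φ X) (K.φ Y) (K.φ Z) (K.φ U) = 0 := by
  unfold lieKahler
  simp only [kahlerRm_phi_phi, g_kahlerRm_phi_phi]
  ring

end LieDerivative

section Soliton

variable {n : ℕ} [NeZero n] {C : Type*} [CommRing C] [Algebra ℝ C] {K : KenmotsuManifold n C}
  {V X Y Z U : Derivation ℝ C C} {β : C} {l : ℝ}

theorem eta_nabla_of_eta_eq_zero (hY : K.η Y = 0) : K.η (K.nabla X Y) = -K.g X Y := by
  have h := K.apply_eta X Y
  rw [hY, map_zero] at h
  linear_combination -h

theorem lieNabla_eq_of_lieG_eq (hβ : ∀ X : Derivation ℝ C C, X β = -(2 * β * K.η X))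
    (hV : K.lieG V = K.etaForm (2 * (β + 1 - algebraMap ℝ C l)) (-(2 * (β + 1)))) :
    K.lieNabla V X Y = -(2 * β * K.η X) • Y - (2 * β * K.η Y) • X
      + (-(2 * K.g X Y) + (4 * β + 2) * (K.η X * K.η Y)) • K.ξ := by
  have hcov (X Y Z : Derivation ℝ C C) : K.covDeriv (K.lieG V) X Y Z
      = -(4 * β * K.η X * K.g Y Z) + 4 * β * K.η X * (K.η Y * K.η Z)
        - 2 * (β + 1) * ((K.g X Y - K.η X * K.η Y) * K.η Z
          + K.η Y * (K.g X Z - K.η X * K.η Z)) := by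
    have hp : X (2 * (β + 1 - algebraMap ℝ C l)) = -(4 * β * K.η X) := by
      rw [two_mul, map_add, map_sub, map_add, X.map_algebraMap, Derivation.map_one_eq_zero, hβ]
      ring
    have hq : X (-(2 * (β + 1))) = 4 * β * K.η X := by
      rw [two_mul, map_neg, map_add, map_add, Derivation.map_one_eq_zero, hβ]
      ring
    rw [hV, covDeriv_etaForm, hp, hq]
    ring
  refine K.ext_g fun Z ↦ eq_of_two_mul_eq ?_
  rw [two_mul_g_lieNabla, hcov, hcov, hcov]
  simp only [K.g_add_left, g_sub_left, K.g_smul_left, g_xi_left]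
  rw [K.g_symm Z X, K.g_symm Z Y, K.g_symm Y X]
  ring

theorem g_lieRm_of_horizontal (hβ : ∀ X : Derivation ℝ C C, X β = -(2 * β * K.η X))
    (hV : K.lieG V = K.etaForm (2 * (β + 1 - algebraMap ℝ C l)) (-(2 * (β + 1))))
    (hX : K.η X = 0) (hY : K.η Y = 0) (hZ : K.η Z = 0) (hU : K.η U = 0) :
    K.g (K.lieRm V X Y Z) U = (2 * β - 2) * K.g (K.wedge X Y Z) U := by
  have hlie : K.η ⁅X, Y⁆ = 0 := by
    rw [← K.torsion_free, eta_sub, eta_nabla_of_eta_eq_zero hY, eta_nabla_of_eta_eq_zero hX,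
      K.g_symm X Y, sub_self]
  have hL {X : Derivation ℝ C C} (Y : Derivation ℝ C C) (hX : K.η X = 0) : K.lieNabla V X Y
      = -(2 * β * K.η Y) • X - (2 * K.g X Y) • K.ξ := by
    rw [lieNabla_eq_of_lieG_eq hβ hV, hX]
    module
  have hnablaL (X : Derivation ℝ C C) {Y : Derivation ℝ C C} (hY : K.η Y = 0) :
      K.g (K.nabla X (K.lieNabla V Y Z)) U = -(2 * K.g Y Z * K.g X U) := by
    rw [hL Z hY, hZ, mul_zero, neg_zero, zero_smul, zero_sub, ← neg_smul, K.nabla_leibniz, nabla_xi,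
      K.g_add_left, K.g_smul_left, K.g_smul_left, g_sub_left, K.g_smul_left, g_xi_left, hU]
    ring
  rw [lieRm_eq_lieNabla, hL (K.nabla Y Z) hX, hL (K.nabla X Z) hY, hL Z hlie]
  simp only [K.g_add_left, g_sub_left, hnablaL X hY, hnablaL Y hX, K.g_smul_left, g_xi_left, hU,
    eta_nabla_of_eta_eq_zero hZ, hZ, wedge]
  ring

theorem lieKahler_of_horizontal (hβ : ∀ X : Derivation ℝ C C, X β = -(2 * β * K.η X))
    (hV : K.lieG V = K.etaForm (2 * (β + 1 - algebraMap ℝ C l)) (-(2 * (β + 1))))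
    (hX : K.η X = 0) (hY : K.η Y = 0) (hZ : K.η Z = 0) (hU : K.η U = 0) :
    K.lieKahler V X Y Z U
      = 2 * (β + 1 - algebraMap ℝ C l) * K.g (K.kahlerRm X Y Z) U
        + (4 * β - 2 * algebraMap ℝ C l) * K.g (K.wedge X Y Z) U := by
  rw [lieKahler_eq_lieRm, g_lieRm_of_horizontal hβ hV hX hY hZ hU, hV]
  simp only [etaForm, hX, hY, hU, kahlerRm, wedge, K.g_add_left, g_sub_left, K.g_smul_left]
  ring

theorem mul_wedge_alternation_of_horizontal
    (hβ : ∀ X : Derivation ℝ C C, X β = -(2 * β * K.η X))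
    (hV : K.lieG V = K.etaForm (2 * (β + 1 - algebraMap ℝ C l)) (-(2 * (β + 1))))
    (hX : K.η X = 0) (hY : K.η Y = 0) (hZ : K.η Z = 0) (hU : K.η U = 0) :
    (4 * β - 2 * algebraMap ℝ C l)
      * (K.g (K.wedge X Y Z) U - K.g (K.wedge (K.φ X) (K.φ Y) Z) U) = 0 := by
  have h := K.lieKahler_alternation V X Y Z U
  rw [lieKahler_of_horizontal hβ hV hX hY hZ hU,
    lieKahler_of_horizontal hβ hV (K.eta_phi X) (K.eta_phi Y) hZ hU,
    lieKahler_of_horizontal hβ hV hX hY (K.eta_phi Z) (K.eta_phi U),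
    lieKahler_of_horizontal hβ hV (K.eta_phi X) (K.eta_phi Y) (K.eta_phi Z) (K.eta_phi U)] at h
  have hphi {X Z : Derivation ℝ C C} (hX : K.η X = 0) : K.g (K.φ X) (K.φ Z) = K.g X Z := by
    rw [K.compat_phi, hX, zero_mul, sub_zero]
  refine eq_of_two_mul_eq ?_
  simp only [kahlerRm_phi_phi, g_kahlerRm_phi_phi, wedge, g_sub_left, K.g_smul_left, hphi hX,
    hphi hY] at h ⊢
  simp only [g_phi_left] at h ⊢
  linear_combination h

variable (K X U) in
theorem sum_wedge_alternation_phi_frame (hX : K.η X = 0) (hU : K.η U = 0) :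
    ∑ i, (K.g (K.wedge X (K.φ (K.e i)) (K.φ (K.e i))) U
      - K.g (K.wedge (K.φ X) (K.φ (K.φ (K.e i))) (K.φ (K.e i))) U)
      = 2 * (n - 1) * K.g X U := by
  have hterm (i) : K.g (K.wedge X (K.φ (K.e i)) (K.φ (K.e i))) U
      - K.g (K.wedge (K.φ X) (K.φ (K.φ (K.e i))) (K.φ (K.e i))) U
      = K.g X U * K.g (K.φ (K.e i)) (K.φ (K.e i)) - K.g X (K.φ (K.e i)) * K.g U (K.φ (K.e i))
        - K.g X (K.e i) * K.g U (K.e i) := by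
    have hφφ (Y : Derivation ℝ C C) (hY : K.η Y = 0) : K.g (K.φ (K.φ (K.e i))) Y
        = -K.g Y (K.e i) := by
      rw [K.phi_phi, K.g_add_left, g_neg_left, K.g_smul_left, g_xi_left, hY, mul_zero, add_zero,
        K.g_symm]
    simp only [wedge, g_sub_left, K.g_smul_left]
    rw [g_phi_self, hφφ U hU, K.compat_phi X, hX, K.g_symm (K.φ (K.e i)) U]
    ring
  simp only [hterm, Finset.sum_sub_distrib, ← Finset.mul_sum, sum_g_phi_phi, sum_g_phi_mul_g_phi,
    sum_g_mul_g]
  rw [K.compat_phi, hX]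
  ring

end Soliton

section HigherDimension

variable {n : ℕ} [n.AtLeastTwo] {C : Type*} [CommRing C] [Algebra ℝ C] {K : KenmotsuManifold n C}
  {V : Derivation ℝ C C} {α β : C} {l : ℝ}

theorem eq_zero_of_mul_wedge_alternation {a : C}
    (h : ∀ {X Y Z U : Derivation ℝ C C}, K.η X = 0 → K.η Y = 0 → K.η Z = 0 → K.η U = 0 →
      a * (K.g (K.wedge X Y Z) U - K.g (K.wedge (K.φ X) (K.φ Y) Z) U) = 0) : a = 0 := by
  have hg {X U : Derivation ℝ C C} (hX : K.η X = 0) (hU : K.η U = 0) :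
      a * (2 * (n - 1) * K.g X U) = 0 := by
    rw [← K.sum_wedge_alternation_phi_frame X U hX hU, Finset.mul_sum]
    exact Finset.sum_eq_zero fun i _ ↦ h hX (K.eta_phi _) (K.eta_phi _) hU
  have htrace : 2 * (n - 1) * (2 * n) * a = 0 := by
    rw [← K.sum_g_phi_phi, Finset.mul_sum, Finset.sum_mul]
    refine Finset.sum_eq_zero fun i _ ↦ ?_
    rw [mul_comm, hg (K.eta_phi _) (K.eta_phi _)]
  have hunit {m : ℕ} (hm : m ≠ 0) := isUnit_natCast_of_algebra_real (A := C) hm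
  have h2 : IsUnit (2 : C) := mod_cast hunit two_ne_zero
  exact ((h2.mul (isUnit_natCast_sub_one_of_algebra_real n)).mul
    (h2.mul (hunit (NeZero.ne n)))).mul_right_eq_zero.1 htrace

theorem apply_etaEinstein_right_coeff (X : Derivation ℝ C C) (hS : K.S = K.etaForm α β) :
    X β = -(2 * β * K.η X) := by
  have hξ : K.ξ β = -(2 * β) := by
    have h := contracted_bianchi_etaEinstein K.ξ hS
    rw [K.eta_xi] at h
    refine (isUnit_natCast_of_algebra_real (NeZero.ne n)).mul_left_cancel ?_
    linear_combination h
  have h := contracted_bianchi_etaEinstein X hS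
  rw [hξ] at h
  refine (isUnit_natCast_sub_one_of_algebra_real n).mul_left_cancel ?_
  linear_combination h

theorem etaEinstein_right_coeff_eq_zero (hS : K.S = K.etaForm α β)
    (hV : K.IsStarRicciSoliton V l) : β = 0 := by
  have hβ := fun X ↦ apply_etaEinstein_right_coeff X hS
  have hβl : 4 * β - 2 * algebraMap ℝ C l = 0 := eq_zero_of_mul_wedge_alternation
    (mul_wedge_alternation_of_horizontal hβ (lieG_eq_etaForm_of_isStarRicciSoliton hS hV))
  have hconst : β + β = algebraMap ℝ C l := eq_of_two_mul_eq (by linear_combination hβl)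
  have hξ := congrArg K.ξ hconst
  rw [map_add, K.ξ.map_algebraMap, hβ, K.eta_xi] at hξ
  exact eq_of_two_mul_eq (eq_of_two_mul_eq (by linear_combination -hξ))

end HigherDimension

end KenmotsuManifold

open KenmotsuManifold in
/-- If an `η`-Einstein Kenmotsu manifold of dimension `2n+1 > 3`
admits a `*`-Ricci soliton, then it is Einstein with `S = -2n g`. -/
theorem stmt7 {n : ℕ} {C : Type*} [CommRing C] [Algebra ℝ C]
    (K : KenmotsuManifold n C) (hn : 1 < n) (hE : K.IsEtaEinstein)
    (V : Derivation ℝ C C) (l : ℝ) (h : K.IsStarRicciSoliton V l)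
    (X Y : Derivation ℝ C C) :
    K.S X Y = (-(2 * (n : ℝ))) • K.g X Y := by
  obtain ⟨α, β, hαβ⟩ := hE
  have : n.AtLeastTwo := ⟨hn⟩
  have hS : K.S = K.etaForm α β := funext₂ hαβ
  have hβ : β = 0 := etaEinstein_right_coeff_eq_zero hS h
  have hα : α = -(2 * n) := by rw [etaEinstein_left_coeff hS, hβ, sub_zero]
  rw [hαβ, hα, hβ, Algebra.smul_def, map_neg, map_mul, map_ofNat, map_natCast]
  ring
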